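/- Let d ≥ 5. The function f(ρ) = (1−ρ²)^{(5−d)/2} f_0(ρ), where f_0(ρ) = (d−4−3ρ²)/(d−4+3ρ²)², solves the mode ODE with parameter λ = d−4 on (0,1), i.e., (1−ρ²)f''(ρ) + ((d−1)/ρ − 2(d−2)ρ)f'(ρ) − ((d−3)(d−2) − 24(d−1)(d−4)/(d−4+3ρ²)²)f(ρ) = 0 for all ρ ∈ (0,1). -/

import Mathlib

/-!
On self-similar modes the conformal symmetry acts by multiplication with a power of `1 - ρ²`:
whatever the potential, it intertwines the mode operators with parameters `d - 3 - μ` and `μ`.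
The gauge mode generated by moving the blow-up time, `f₀ ∝ U* + ρ U*'`, has parameter `1`, so its
conformal image has parameter `d - 4`.
-/

open Filter Topology

/-- The differential operator of the mode equation in dimension `d` with potential `V` and spectral
parameter `μ` (the `λ` of the paper, which is a reserved token here). -/
noncomputable def modeOperator (d : ℝ) (V : ℝ → ℝ) (μ : ℝ) (f : ℝ → ℝ) (ρ : ℝ) : ℝ :=
  (1 - ρ ^ 2) * iteratedDeriv 2 f ρ + ((d - 1) / ρ - 2 * (μ + 2) * ρ) * deriv f ρ
    - ((μ + 1) * (μ + 2) - V ρ) * f ρ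

/-- The potential `3 (U*)²` created by linearizing the cubic nonlinearity at the self-similar
profile `U*`. -/
noncomputable def profilePotential (d ρ : ℝ) : ℝ :=
  24 * (d - 1) * (d - 4) / (d - 4 + 3 * ρ ^ 2) ^ 2

/-- The mode `f₀` generated by moving the blow-up time of the self-similar solution, up to a
constant factor. -/
noncomputable def gaugeMode (d ρ : ℝ) : ℝ :=
  (d - 4 - 3 * ρ ^ 2) / (d - 4 + 3 * ρ ^ 2) ^ 2

/-- The action of the conformal transformation on mode functions, normalized so that its values are
mode functions with parameter `μ`. The exponent is the nonzero Frobenius index of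
`modeOperator d V μ` at `ρ = 1`. -/
noncomputable def conformalTransform (d μ : ℝ) (g : ℝ → ℝ) (ρ : ℝ) : ℝ :=
  (1 - ρ ^ 2) ^ ((d - 3) / 2 - μ) * g ρ

lemma hasDerivAt_add_const_mul_sq (c k x : ℝ) :
    HasDerivAt (fun y : ℝ ↦ c + k * y ^ 2) (2 * k * x) x := by
  refine (((hasDerivAt_pow 2 x).const_mul k).const_add c).congr_deriv ?_
  norm_num
  ring

section ConformalSymmetry

variable {a g' x : ℝ} {g : ℝ → ℝ}

lemma hasDerivAt_one_sub_sq (x : ℝ) : HasDerivAt (fun y : ℝ ↦ 1 - y ^ 2) (-(2 * x)) x := by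
  simpa [sub_eq_add_neg] using hasDerivAt_add_const_mul_sq 1 (-1) x

lemma hasDerivAt_one_sub_sq_rpow_mul (hx : 1 - x ^ 2 ≠ 0) (hg : HasDerivAt g g' x) :
    HasDerivAt (fun y ↦ (1 - y ^ 2) ^ a * g y)
      ((1 - x ^ 2) ^ a * (g' - 2 * a * x / (1 - x ^ 2) * g x)) x := by
  refine (((hasDerivAt_one_sub_sq x).rpow_const (p := a) (.inl hx)).mul hg).congr_deriv ?_
  rw [Real.rpow_sub_one hx]
  ring

lemma eventually_one_sub_sq_ne_zero (hx : 1 - x ^ 2 ≠ 0) : ∀ᶠ y in 𝓝 x, 1 - y ^ 2 ≠ 0 :=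
  (hasDerivAt_one_sub_sq x).continuousAt.eventually_ne hx

lemma iteratedDeriv_two_one_sub_sq_rpow_mul (hx : 1 - x ^ 2 ≠ 0)
    (hg : ∀ᶠ y in 𝓝 x, DifferentiableAt ℝ g y) (hg' : DifferentiableAt ℝ (deriv g) x) :
    iteratedDeriv 2 (fun y ↦ (1 - y ^ 2) ^ a * g y) x =
      (1 - x ^ 2) ^ a * (iteratedDeriv 2 g x - 4 * a * x / (1 - x ^ 2) * deriv g x
        + (4 * a * (a - 1) * x ^ 2 / (1 - x ^ 2) ^ 2 - 2 * a / (1 - x ^ 2)) * g x) := by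
  have first_deriv : deriv (fun y ↦ (1 - y ^ 2) ^ a * g y) =ᶠ[𝓝 x]
      fun y ↦ (1 - y ^ 2) ^ a * (deriv g y - 2 * a * y / (1 - y ^ 2) * g y) := by
    filter_upwards [eventually_one_sub_sq_ne_zero hx, hg] with y hy hgy
    exact (hasDerivAt_one_sub_sq_rpow_mul hy hgy.hasDerivAt).deriv
  have coeff_deriv : HasDerivAt (fun y ↦ 2 * a * y / (1 - y ^ 2))
      ((2 * a * (1 - x ^ 2) + 4 * a * x ^ 2) / (1 - x ^ 2) ^ 2) x := by
    refine (((hasDerivAt_id x).const_mul (2 * a)).div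
      (hasDerivAt_one_sub_sq x) hx).congr_deriv ?_
    simp only [id_eq]
    ring
  have second_deriv := hasDerivAt_one_sub_sq_rpow_mul (a := a) hx
    (hg'.hasDerivAt.sub (coeff_deriv.mul hg.self_of_nhds.hasDerivAt))
  simp only [iteratedDeriv_succ, iteratedDeriv_zero]
  rw [first_deriv.deriv_eq]
  refine second_deriv.deriv.trans ?_
  simp only [Pi.sub_apply, Pi.mul_apply]
  field_simp
  ring

theorem modeOperator_conformalTransform (d μ : ℝ) (V : ℝ → ℝ) (hx₀ : x ≠ 0) (hx : 1 - x ^ 2 ≠ 0)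
    (hg : ∀ᶠ y in 𝓝 x, DifferentiableAt ℝ g y) (hg' : DifferentiableAt ℝ (deriv g) x) :
    modeOperator d V μ (conformalTransform d μ g) x =
      conformalTransform d μ (modeOperator d V (d - 3 - μ) g) x := by
  unfold modeOperator conformalTransform
  rw [iteratedDeriv_two_one_sub_sq_rpow_mul hx hg hg',
    (hasDerivAt_one_sub_sq_rpow_mul hx hg.self_of_nhds.hasDerivAt).deriv]
  set a := (d - 3) / 2 - μ with ha
  have first_order : -((1 - x ^ 2) * (4 * a * x / (1 - x ^ 2))) - 2 * (μ + 2) * x =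
      -(2 * (d - 3 - μ + 2) * x) := by
    rw [mul_div_cancel₀ _ hx, ha]
    ring
  -- The pole at `x ^ 2 = 1` cancels because `2 * (a + μ + 1) = d - 1`.
  have zeroth_order : (1 - x ^ 2) * (4 * a * (a - 1) * x ^ 2 / (1 - x ^ 2) ^ 2
        - 2 * a / (1 - x ^ 2))
      - ((d - 1) / x - 2 * (μ + 2) * x) * (2 * a * x / (1 - x ^ 2)) - (μ + 1) * (μ + 2) =
      -((d - 3 - μ + 1) * (d - 3 - μ + 2)) := by
    rw [ha]
    field_simp
    ring
  linear_combination (1 - x ^ 2) ^ a * (deriv g x * first_order + g x * zeroth_order)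

end ConformalSymmetry

section GaugeMode

variable {d x : ℝ}

lemma hasDerivAt_gaugeMode (hD : d - 4 + 3 * x ^ 2 ≠ 0) :
    HasDerivAt (gaugeMode d) (18 * x * (x ^ 2 - (d - 4)) / (d - 4 + 3 * x ^ 2) ^ 3) x := by
  have hN : HasDerivAt (fun y : ℝ ↦ d - 4 - 3 * y ^ 2) (2 * -3 * x) x := by
    simpa [sub_eq_add_neg] using hasDerivAt_add_const_mul_sq (d - 4) (-3) x
  have hDx := hasDerivAt_add_const_mul_sq (d - 4) 3 x
  refine (hN.div (hDx.pow 2) (pow_ne_zero 2 hD)).congr_deriv ?_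
  simp only [Pi.pow_apply, Nat.add_one_sub_one, Nat.cast_ofNat, pow_one]
  field_simp
  ring

lemma eventually_hasDerivAt_gaugeMode (hD : d - 4 + 3 * x ^ 2 ≠ 0) :
    ∀ᶠ y in 𝓝 x, HasDerivAt (gaugeMode d)
      (18 * y * (y ^ 2 - (d - 4)) / (d - 4 + 3 * y ^ 2) ^ 3) y :=
  ((hasDerivAt_add_const_mul_sq (d - 4) 3 x).continuousAt.eventually_ne hD).mono
    fun _ ↦ hasDerivAt_gaugeMode

lemma hasDerivAt_deriv_gaugeMode (hD : d - 4 + 3 * x ^ 2 ≠ 0) :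
    HasDerivAt (deriv (gaugeMode d))
      (18 * (18 * (d - 4) * x ^ 2 - (d - 4) ^ 2 - 9 * x ^ 4) / (d - 4 + 3 * x ^ 2) ^ 4) x := by
  have hN : HasDerivAt (fun y : ℝ ↦ 18 * y * (y ^ 2 - (d - 4)))
      (18 * (3 * x ^ 2 - (d - 4))) x := by
    refine (((hasDerivAt_id x).const_mul 18).mul
      ((hasDerivAt_pow 2 x).sub_const (d - 4))).congr_deriv ?_
    simp only [id_eq]
    norm_num
    ring
  have hDx := hasDerivAt_add_const_mul_sq (d - 4) 3 x
  refine HasDerivAt.congr_of_eventuallyEq ?_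
    ((eventually_hasDerivAt_gaugeMode hD).mono fun _ hy ↦ hy.deriv)
  refine (hN.div (hDx.pow 3) (pow_ne_zero 3 hD)).congr_deriv ?_
  simp only [Pi.pow_apply]
  field_simp
  ring

theorem modeOperator_gaugeMode (hx₀ : x ≠ 0) (hD : d - 4 + 3 * x ^ 2 ≠ 0) :
    modeOperator d (profilePotential d) 1 (gaugeMode d) x = 0 := by
  rw [modeOperator, iteratedDeriv_succ, iteratedDeriv_one, (hasDerivAt_deriv_gaugeMode hD).deriv,
    (hasDerivAt_gaugeMode hD).deriv, profilePotential, gaugeMode]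
  -- `field_simp` orders the factors this way before it looks for the nonvanishing hypothesis.
  have hD' : d - 4 + x ^ 2 * 3 ≠ 0 := by rwa [mul_comm (x ^ 2)]
  field_simp
  ring

end GaugeMode

theorem conformal_mode_solves_mode_ODE_general (d : ℝ)
    (f₀ : ℝ → ℝ) (hf₀ : ∀ ρ, f₀ ρ = (d - 4 - 3 * ρ ^ 2) / (d - 4 + 3 * ρ ^ 2) ^ 2)
    (f : ℝ → ℝ) (hf : ∀ ρ, f ρ = (1 - ρ ^ 2) ^ ((5 - d) / 2) * f₀ ρ)
    {ρ : ℝ} (hρ₀ : ρ ≠ 0) (hρ₁ : ρ ^ 2 < 1) (hD : d - 4 + 3 * ρ ^ 2 ≠ 0) :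
    (1 - ρ ^ 2) * iteratedDeriv 2 f ρ + ((d - 1) / ρ - 2 * (d - 2) * ρ) * deriv f ρ
      - ((d - 3) * (d - 2) - 24 * (d - 1) * (d - 4) / (d - 4 + 3 * ρ ^ 2) ^ 2) * f ρ = 0 := by
  have f_eq : f = conformalTransform d (d - 4) (gaugeMode d) := by
    funext y
    rw [hf, hf₀, conformalTransform, gaugeMode, show (d - 3) / 2 - (d - 4) = (5 - d) / 2 by ring]
  have mode_eq : modeOperator d (profilePotential d) (d - 4) f ρ = 0 := by
    rw [f_eq, modeOperator_conformalTransform d (d - 4) _ hρ₀ (sub_pos.2 hρ₁).ne'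
      ((eventually_hasDerivAt_gaugeMode hD).mono fun _ hy ↦ hy.differentiableAt)
      (hasDerivAt_deriv_gaugeMode hD).differentiableAt,
      conformalTransform, show d - 3 - (d - 4) = 1 by ring, modeOperator_gaugeMode hρ₀ hD, mul_zero]
  rw [modeOperator, profilePotential] at mode_eq
  linear_combination mode_eq

/-- For `d ≥ 5`, the function `f(ρ) = (1−ρ²)^{(5−d)/2} f₀(ρ)`, with
`f₀(ρ) = (d−4−3ρ²)/(d−4+3ρ²)²`, solves the mode ODE with parameter `λ = d−4`
on `(0,1)`. -/
theorem conformal_mode_solves_mode_ODE (d : ℕ) (hd : 5 ≤ d)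
    (f₀ : ℝ → ℝ)
    (hf₀ : ∀ ρ, f₀ ρ = ((d : ℝ) - 4 - 3 * ρ ^ 2) / ((d : ℝ) - 4 + 3 * ρ ^ 2) ^ 2)
    (f : ℝ → ℝ)
    (hf : ∀ ρ, f ρ = (1 - ρ ^ 2) ^ ((5 - (d : ℝ)) / 2) * f₀ ρ) :
    ∀ ρ ∈ Set.Ioo (0 : ℝ) 1,
      (1 - ρ ^ 2) * iteratedDeriv 2 f ρ
        + (((d : ℝ) - 1) / ρ - 2 * ((d : ℝ) - 2) * ρ) * deriv f ρ
        - (((d : ℝ) - 3) * ((d : ℝ) - 2)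
            - 24 * ((d : ℝ) - 1) * ((d : ℝ) - 4) /
                ((d : ℝ) - 4 + 3 * ρ ^ 2) ^ 2) * f ρ = 0 := by
  rintro ρ ⟨hρ₀, hρ₁⟩
  have hd' : (5 : ℝ) ≤ d := by exact_mod_cast hd
  exact conformal_mode_solves_mode_ODE_general d f₀ hf₀ f hf hρ₀.ne' (by nlinarith)
    (by nlinarith [sq_nonneg ρ])
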